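/- Suppose k≥1, i_1=1, S_1(C)=dom(C), and i_{k+1} is a vertex of G with i_{k+1}>i_k that is a predecessor in G of some vertex i_ℓ∈dom(C) that is not bypassed in C. For each t∈{1,…,m} let D_t be the clause C∨¬p_{i_{k+1},t}. Then i_{k+1}∈S_1(D_t) for every t∈{1,…,m}. -/

import Mathlib

open scoped Classical

/-! ### Clauses and literals -/

abbrev Lit (V : Type) := V × Bool
abbrev Clause (V : Type) := Finset (V × Bool)

/-- Propositional variables for the Stone principle: `p i j` and `r j`. -/
inductive SV where
  | p (i j : ℕ) : SV
  | r (j : ℕ) : SV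
deriving DecidableEq

/-- A dag on vertices `1,…,N` with unique sink `1`, in which every non-source vertex
(the vertices `1,…,n`) has exactly the two predecessors `p1 i` and `p2 i`,
every edge `(i′,i)` satisfies `i′ > i`, and the sources are exactly `n+1,…,N`. -/
structure StoneDag where
  N : ℕ
  n : ℕ
  p1 : ℕ → ℕ
  p2 : ℕ → ℕ
  n_lt_N : n < N
  p1_gt : ∀ i, 1 ≤ i → i ≤ n → i < p1 i
  p2_gt : ∀ i, 1 ≤ i → i ≤ n → i < p2 i
  p1_le : ∀ i, 1 ≤ i → i ≤ n → p1 i ≤ N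
  p2_le : ∀ i, 1 ≤ i → i ≤ n → p2 i ≤ N
  p_ne : ∀ i, 1 ≤ i → i ≤ n → p1 i ≠ p2 i
  unique_sink : ∀ i, 2 ≤ i → i ≤ N → ∃ v, 1 ≤ v ∧ v ≤ n ∧ (p1 v = i ∨ p2 v = i)

/-- The clause set `Stone(G,m)`. -/
def stoneClauses (G : StoneDag) (m : ℕ) : Set (Clause SV) :=
  { C | ∃ i, 1 ≤ i ∧ i ≤ G.N ∧
      C = (Finset.Icc 1 m).image (fun j => ((SV.p i j, true) : Lit SV)) } ∪
  { C | ∃ i j, G.n < i ∧ i ≤ G.N ∧ 1 ≤ j ∧ j ≤ m ∧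
      C = {(SV.p i j, false), (SV.r j, true)} } ∪
  { C | ∃ j, 1 ≤ j ∧ j ≤ m ∧ C = {(SV.p 1 j, false), (SV.r j, false)} } ∪
  { C | ∃ i j j' j'', 1 ≤ i ∧ i ≤ G.n ∧ 1 ≤ j ∧ j ≤ m ∧ 1 ≤ j' ∧ j' ≤ m ∧
      1 ≤ j'' ∧ j'' ≤ m ∧ j ≠ j' ∧ j ≠ j'' ∧
      C = {(SV.p (G.p1 i) j', false), (SV.r j', false),
           (SV.p (G.p2 i) j'', false), (SV.r j'', false),
           (SV.p i j, false), (SV.r j, true)} }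

/-! ### Resolution inference rules -/

/-- `(A ∖ {x}) ∪ (B ∖ {¬x})`. -/
def wres {V : Type} [DecidableEq V] (x : V) (A B : Clause V) : Clause V :=
  A.erase (x, true) ∪ B.erase (x, false)

/-- w-resolution inference. -/
def wstep {V : Type} [DecidableEq V] (x : V) (A B C : Clause V) : Prop :=
  C = wres x A B

/-- ordinary resolution inference. -/
def rstep {V : Type} [DecidableEq V] (x : V) (A B C : Clause V) : Prop :=
  (x, true) ∈ A ∧ (x, false) ∈ B ∧ C = wres x A B

/-- degenerate resolution inference. -/
def dstep {V : Type} [DecidableEq V] (x : V) (A B C : Clause V) : Prop :=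
  ((x, true) ∈ A ∧ (x, false) ∈ B ∧ C = wres x A B) ∨
  ((x, true) ∈ A ∧ (x, false) ∉ B ∧ C = B) ∨
  ((x, true) ∉ A ∧ (x, false) ∈ B ∧ C = A) ∨
  ((x, true) ∉ A ∧ (x, false) ∉ B ∧ (C = A ∨ C = B))

/-! ### Tree-like proofs -/

/-- Binary proof trees: each node is labeled with a clause, internal nodes also
with a resolution variable. -/
inductive PTree (V : Type) [DecidableEq V] where
  | leaf : Clause V → PTree V
  | node : Clause V → V → PTree V → PTree V → PTree V

namespace PTree

variable {V : Type} [DecidableEq V]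

/-- The clause labeling the root. -/
def clause : PTree V → Clause V
  | leaf c => c
  | node c _ _ _ => c

/-- Number of nodes. -/
def size : PTree V → ℕ
  | leaf _ => 1
  | node _ _ t1 t2 => t1.size + t2.size + 1

/-- The set of variables used as resolution variables. -/
def resVars : PTree V → Finset V
  | leaf _ => ∅
  | node _ x t1 t2 => insert x (t1.resVars ∪ t2.resVars)

/-- No variable is used as a resolution variable more than once on any
root-to-leaf path. -/
def regular : PTree V → Prop
  | leaf _ => True
  | node _ x t1 t2 => x ∉ t1.resVars ∧ x ∉ t2.resVars ∧ t1.regular ∧ t2.regular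

/-- Every internal node is obtained from its children by the inference `step`. -/
def wf (step : V → Clause V → Clause V → Clause V → Prop) : PTree V → Prop
  | leaf _ => True
  | node c x t1 t2 => step x t1.clause t2.clause c ∧ t1.wf step ∧ t2.wf step

/-- All clauses occurring in the tree. -/
def clauses : PTree V → Set (Clause V)
  | leaf c => {c}
  | node c _ t1 t2 => t1.clauses ∪ t2.clauses ∪ {c}

/-- Every leaf is labeled by a clause of `Γ` or by a clause occurring strictly
earlier in postorder; `S` is the set of clauses occurring before this subtree. -/
def lemmasOK (Γ : Set (Clause V)) : PTree V → Set (Clause V) → Prop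
  | leaf c, S => c ∈ Γ ∨ c ∈ S
  | node _ _ t1 t2, S => t1.lemmasOK Γ S ∧ t2.lemmasOK Γ (S ∪ t1.clauses)

/-- Every leaf is labeled by a clause of `Γ`. -/
def leavesIn (Γ : Set (Clause V)) : PTree V → Prop
  | leaf c => c ∈ Γ
  | node _ _ t1 t2 => t1.leavesIn Γ ∧ t2.leavesIn Γ

/-- Postorder scan computing, from the set `L` of clauses learned so far
(initially `Γ`), the pair of (i) the set of clauses learned after traversing the
subtree — a clause becomes learned when it is the final clause of an input
subderivation, i.e. a subderivation each of whose inferences has at least one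
hypothesis that is already learned — and (ii) whether this subtree is an input
subderivation. -/
def scan : PTree V → Set (Clause V) → Set (Clause V) × Prop
  | leaf _, L => (L, True)
  | node c _ t1 t2, L =>
      let r1 := t1.scan L
      let r2 := t2.scan r1.1
      let inp : Prop := r1.2 ∧ r2.2 ∧ (t1.clause ∈ r1.1 ∨ t2.clause ∈ r2.1)
      ({ d | d ∈ r2.1 ∨ (inp ∧ d = c) }, inp)

/-- Every leaf is labeled by a learned clause (a clause of the initial set `L`,
or one derived by an input subderivation strictly earlier in postorder). -/
def lemOK : PTree V → Set (Clause V) → Prop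
  | leaf c, L => c ∈ L
  | node _ _ t1 t2, L => t1.lemOK L ∧ t2.lemOK (t1.scan L).1

end PTree

/-- regWRTL refutation of `Γ`. -/
def RegWRTLRefutation {V : Type} [DecidableEq V] (Γ : Set (Clause V)) (T : PTree V) : Prop :=
  T.clause = ∅ ∧ T.wf wstep ∧ T.regular ∧ T.lemmasOK Γ ∅

/-- pool resolution refutation of `Γ`. -/
def PoolRefutation {V : Type} [DecidableEq V] (Γ : Set (Clause V)) (T : PTree V) : Prop :=
  T.clause = ∅ ∧ T.wf dstep ∧ T.regular ∧ T.lemmasOK Γ ∅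

/-- regRTL refutation of `Γ`. -/
def RegRTLRefutation {V : Type} [DecidableEq V] (Γ : Set (Clause V)) (T : PTree V) : Prop :=
  T.clause = ∅ ∧ T.wf rstep ∧ T.regular ∧ T.lemmasOK Γ ∅

/-- regRTI refutation of `Γ`: all lemmas are input lemmas. -/
def RegRTIRefutation {V : Type} [DecidableEq V] (Γ : Set (Clause V)) (T : PTree V) : Prop :=
  T.clause = ∅ ∧ T.wf rstep ∧ T.regular ∧ T.lemOK Γ

/-- regRTI derivation of the clause `D` from `Γ`. -/
def RegRTIDeriv {V : Type} [DecidableEq V] (Γ : Set (Clause V)) (D : Clause V)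
    (T : PTree V) : Prop :=
  T.clause = D ∧ T.wf rstep ∧ T.regular ∧ T.lemOK Γ ∧
  ∀ x ∈ T.resVars, (x, true) ∉ D ∧ (x, false) ∉ D

/-- regular tree-like resolution derivation of the clause `D` from `Γ`. -/
def RegTreeDeriv {V : Type} [DecidableEq V] (Γ : Set (Clause V)) (D : Clause V)
    (T : PTree V) : Prop :=
  T.clause = D ∧ T.wf rstep ∧ T.regular ∧ T.leavesIn Γ ∧
  ∀ x ∈ T.resVars, (x, true) ∉ D ∧ (x, false) ∉ D

/-! ### Dag-like derivations -/

/-- A dag-like resolution derivation: a sequence of `len` clauses, each an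
axiom (`just i = none`) or obtained by resolution from two earlier clauses. -/
structure DagDeriv (V : Type) [DecidableEq V] where
  len : ℕ
  cl : ℕ → Clause V
  just : ℕ → Option (ℕ × ℕ × V)

namespace DagDeriv

variable {V : Type} [DecidableEq V]

/-- Validity relative to the initial clause set `Γ`. -/
def ok (D : DagDeriv V) (Γ : Set (Clause V)) : Prop :=
  ∀ i, i < D.len →
    match D.just i with
    | none => D.cl i ∈ Γ
    | some (a, b, x) => a < i ∧ b < i ∧ rstep x (D.cl a) (D.cl b) (D.cl i)

/-- `j` is a premise of `i`. -/
def prem (D : DagDeriv V) (i j : ℕ) : Prop :=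
  ∃ a b x, D.just i = some (a, b, x) ∧ (j = a ∨ j = b)

/-- `j` lies in the subderivation of `i` (is reachable from `i` in the dag). -/
def reach (D : DagDeriv V) : ℕ → ℕ → Prop := Relation.ReflTransGen D.prem

/-- `x` is the resolution variable of the inference at `i`. -/
def resAt (D : DagDeriv V) (i : ℕ) (x : V) : Prop := ∃ a b, D.just i = some (a, b, x)

/-- No variable is used as resolution variable twice along a path of the dag. -/
def regular (D : DagDeriv V) : Prop :=
  ∀ i a b x, D.just i = some (a, b, x) →
    ∀ j, (D.reach a j ∨ D.reach b j) → ¬ D.resAt j x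

/-- The subderivation of `i` uses `x` as a resolution variable. -/
def usesVar (D : DagDeriv V) (i : ℕ) (x : V) : Prop := ∃ j, D.reach i j ∧ D.resAt j x

end DagDeriv

/-! ### Supports, bypassing, and the sets `B`, `B⁺`, `S_ℓ^B(C)` for a clause
`C = ¬p_{i_1,j_1} ∨ … ∨ ¬p_{i_k,j_k}` given by `k` and the functions
`I J : ℕ → ℕ` (with `I ℓ = i_ℓ`, `J ℓ = j_ℓ` for `1 ≤ ℓ ≤ k`). -/

/-- Index `ℓ` is bypassed. -/
def bypassed (k : ℕ) (J : ℕ → ℕ) (ℓ : ℕ) : Prop :=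
  ∃ ℓ', ℓ < ℓ' ∧ ℓ' ≤ k ∧ J ℓ' = J ℓ

/-- `ℓ'` is the max-bypasser of `ℓ`. -/
def maxByp (k : ℕ) (J : ℕ → ℕ) (ℓ ℓ' : ℕ) : Prop :=
  ℓ < ℓ' ∧ ℓ' ≤ k ∧ J ℓ' = J ℓ ∧ ∀ a, ℓ < a → a ≤ k → J a = J ℓ → a ≤ ℓ'

/-- `i_{ℓ'}` directly supports `i_ℓ`. -/
def dsup (G : StoneDag) (k : ℕ) (I J : ℕ → ℕ) (ℓ' ℓ : ℕ) : Prop :=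
  1 ≤ ℓ ∧ ℓ < ℓ' ∧ ℓ' ≤ k ∧
  (maxByp k J ℓ ℓ' ∨
    (¬ bypassed k J ℓ ∧ (I ℓ' = G.p1 (I ℓ) ∨ I ℓ' = G.p2 (I ℓ))))

/-- `i_a` supports `i_b`: reflexive transitive closure of direct support. -/
def supp (G : StoneDag) (k : ℕ) (I J : ℕ → ℕ) : ℕ → ℕ → Prop :=
  Relation.ReflTransGen (dsup G k I J)

/-- `dom(C)` as a set of vertices. -/
def domv (k : ℕ) (I : ℕ → ℕ) : Set ℕ := { v | ∃ a, 1 ≤ a ∧ a ≤ k ∧ I a = v }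

/-- `S_ℓ(C)`: the set of vertices of `dom(C)` supporting `i_ℓ`. -/
def suppSet (G : StoneDag) (k : ℕ) (I J : ℕ → ℕ) (ℓ : ℕ) : Set ℕ :=
  { v | ∃ a, 1 ≤ a ∧ a ≤ k ∧ I a = v ∧ supp G k I J a ℓ }

/-- `i_ℓ ∈ B`: not bypassed and some predecessor outside `dom(C)`. -/
def Bidx (G : StoneDag) (k : ℕ) (I J : ℕ → ℕ) (ℓ : ℕ) : Prop :=
  1 ≤ ℓ ∧ ℓ ≤ k ∧ ¬ bypassed k J ℓ ∧
  (G.p1 (I ℓ) ∉ domv k I ∨ G.p2 (I ℓ) ∉ domv k I)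

/-- `i_ℓ ∈ B₁`: exactly one predecessor outside `dom(C)`. -/
def B1idx (G : StoneDag) (k : ℕ) (I J : ℕ → ℕ) (ℓ : ℕ) : Prop :=
  Bidx G k I J ℓ ∧ (G.p1 (I ℓ) ∈ domv k I ∨ G.p2 (I ℓ) ∈ domv k I)

/-- `i_ℓ ∈ B₂`: both predecessors outside `dom(C)`. -/
def B2idx (G : StoneDag) (k : ℕ) (I J : ℕ → ℕ) (ℓ : ℕ) : Prop :=
  1 ≤ ℓ ∧ ℓ ≤ k ∧ ¬ bypassed k J ℓ ∧
  G.p1 (I ℓ) ∉ domv k I ∧ G.p2 (I ℓ) ∉ domv k I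

/-- `i_ℓ ∈ B⁺`: in `B`, or bypassed with max-bypasser in `B`. -/
def Bplus (G : StoneDag) (k : ℕ) (I J : ℕ → ℕ) (ℓ : ℕ) : Prop :=
  Bidx G k I J ℓ ∨ (1 ≤ ℓ ∧ ℓ ≤ k ∧ ∃ ℓ', maxByp k J ℓ ℓ' ∧ Bidx G k I J ℓ')

/-- Membership in `S_ℓ^B(C)` (on indices). -/
inductive SBmem (G : StoneDag) (k : ℕ) (I J : ℕ → ℕ) (ℓ : ℕ) : ℕ → Prop where
  | base : SBmem G k I J ℓ ℓ
  | byp (a b : ℕ) : SBmem G k I J ℓ a → (a = ℓ ∨ ¬ Bidx G k I J a) →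
      maxByp k J a b → ¬ Bidx G k I J b → SBmem G k I J ℓ b
  | pred (a b : ℕ) : SBmem G k I J ℓ a → (a = ℓ ∨ ¬ Bidx G k I J a) →
      ¬ bypassed k J a → 1 ≤ b → b ≤ k →
      (I b = G.p1 (I a) ∨ I b = G.p2 (I a)) → SBmem G k I J ℓ b

/-- The clause `C_ℓ`. -/
noncomputable def Clc (G : StoneDag) (k : ℕ) (I J : ℕ → ℕ) (ℓ : ℕ) : Clause SV :=
  ((Finset.Icc 1 k).filter fun a =>
      SBmem G k I J ℓ a ∧ ¬(a = ℓ ∧ bypassed k J ℓ)).image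
    fun a => ((SV.p (I a) (J a), false) : Lit SV)

/-- The clause `E_ℓ`. -/
noncomputable def Elc (G : StoneDag) (k : ℕ) (I J : ℕ → ℕ) (ℓ : ℕ) : Clause SV :=
  ((Finset.Icc 1 k).filter fun a =>
      SBmem G k I J ℓ a ∧ Bplus G k I J a ∧ (Bidx G k I J ℓ → a ≠ ℓ)).image
    fun a => ((SV.r (J a), false) : Lit SV)

/-- `t_1,…,t_r` enumerates the indices of `B ∪ {1}` in decreasing order. -/
def EnumB (G : StoneDag) (k : ℕ) (I J : ℕ → ℕ) (r : ℕ) (t : ℕ → ℕ) : Prop :=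
  (∀ q, 1 ≤ q → q ≤ r → (Bidx G k I J (t q) ∨ t q = 1)) ∧
  (∀ q q', 1 ≤ q → q < q' → q' ≤ r → t q' < t q) ∧
  (∀ ℓ, Bidx G k I J ℓ ∨ ℓ = 1 → ∃ q, 1 ≤ q ∧ q ≤ r ∧ t q = ℓ)

/-- The clause `F_q`. -/
noncomputable def Fcl (G : StoneDag) (k : ℕ) (I J : ℕ → ℕ) (r : ℕ) (t : ℕ → ℕ)
    (q : ℕ) : Clause SV :=
  if q = r ∧ ¬ Bidx G k I J 1 then Elc G k I J 1
  else (Finset.Icc 1 (q - 1)).image fun q' => ((SV.r (J (t q')), false) : Lit SV)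

/-- The standing hypotheses on the clause `C`: `k ≥ 1`, `1 = i_1 < … < i_k ≤ n`,
`j_ℓ ∈ {1,…,m}`, and every vertex of `dom(C)` supports vertex `1`. -/
def GoodC (G : StoneDag) (m k : ℕ) (I J : ℕ → ℕ) : Prop :=
  1 ≤ k ∧ I 1 = 1 ∧ I k ≤ G.n ∧
  (∀ a b, 1 ≤ a → a < b → b ≤ k → I a < I b) ∧
  (∀ a, 1 ≤ a → a ≤ k → 1 ≤ J a ∧ J a ≤ m) ∧
  (∀ a, 1 ≤ a → a ≤ k → supp G k I J a 1)

/-!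
Passing from `C` to `D_t` destroys a direct support of `i_b` only if `j_b = t`, and in that case
`i_{k+1}` is the max-bypasser of `i_b` in `D_t`, hence directly supports it. So walk along a chain
of direct supports in `C` from `i_ℓ` to `i_1`: in `D_t` the new vertex supports `i_ℓ`, and every
link of the chain either survives or can be replaced by a direct support from `i_{k+1}`.

The labels of `D_t` are encoded by a function `J'` that agrees with `J` up to `k`, so that
`t = J' (k + 1)`.
-/

section ExtendClause

variable {G : StoneDag} {k b c : ℕ} {I J J' : ℕ → ℕ}

theorem maxByp_last_iff : maxByp k J b k ↔ b < k ∧ J k = J b :=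
  ⟨fun h => ⟨h.1, h.2.2.1⟩, fun h => ⟨h.1, le_rfl, h.2, fun _ _ hak _ => hak⟩⟩

theorem bypassed_succ_iff (hJ : Set.EqOn J' J (Set.Iic k)) (hb : b ≤ k) :
    bypassed (k + 1) J' b ↔ bypassed k J b ∨ J' (k + 1) = J b := by
  rw [← hJ hb]
  constructor
  · rintro ⟨a, hba, hak, hlabel⟩
    obtain hak | rfl := Nat.le_succ_iff.mp hak
    · exact .inl ⟨a, hba, hak, by rw [← hJ hak, ← hJ hb, hlabel]⟩
    · exact .inr hlabel
  · rintro (⟨a, hba, hak, hlabel⟩ | hlabel)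
    · exact ⟨a, hba, hak.trans k.le_succ, by rw [hJ hak, hJ hb, hlabel]⟩
    · exact ⟨k + 1, Nat.lt_succ_of_le hb, le_rfl, hlabel⟩

theorem maxByp.succ (hJ : Set.EqOn J' J (Set.Iic k)) (hne : J' (k + 1) ≠ J b)
    (h : maxByp k J b c) : maxByp (k + 1) J' b c := by
  obtain ⟨hbc, hck, hlabel, hmax⟩ := h
  have hb : J' b = J b := hJ (hbc.le.trans hck)
  refine ⟨hbc, hck.trans k.le_succ, by rw [hJ hck, hb, hlabel], fun a hba hak ha => ?_⟩
  rw [hb] at ha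
  obtain hak | rfl := Nat.le_succ_iff.mp hak
  · exact hmax a hba hak (by rw [← hJ hak, ha])
  · exact absurd ha hne

theorem dsup_last_of_label_eq (hb : 1 ≤ b) (hbk : b < k) (hlabel : J k = J b) :
    dsup G k I J k b :=
  ⟨hb, hbk, le_rfl, .inl (maxByp_last_iff.mpr ⟨hbk, hlabel⟩)⟩

theorem dsup_last_of_pred (hJ : Set.EqOn J' J (Set.Iic k)) (hb : 1 ≤ b) (hbk : b ≤ k)
    (hbyp : ¬ bypassed k J b) (hpred : I (k + 1) = G.p1 (I b) ∨ I (k + 1) = G.p2 (I b)) :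
    dsup G (k + 1) I J' (k + 1) b := by
  have hbk' : b < k + 1 := Nat.lt_succ_of_le hbk
  by_cases hlabel : J' (k + 1) = J b
  · exact dsup_last_of_label_eq hb hbk' (by rw [hlabel, hJ hbk])
  · have hbyp' : ¬ bypassed (k + 1) J' b := by
      rw [bypassed_succ_iff hJ hbk]
      exact not_or.mpr ⟨hbyp, hlabel⟩
    exact ⟨hb, hbk', le_rfl, .inr ⟨hbyp', hpred⟩⟩

theorem dsup.succ_or_last (hJ : Set.EqOn J' J (Set.Iic k)) (h : dsup G k I J c b) :
    dsup G (k + 1) I J' c b ∨ dsup G (k + 1) I J' (k + 1) b := by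
  obtain ⟨hb, hbc, hck, h⟩ := h
  have hbk : b ≤ k := hbc.le.trans hck
  by_cases hlabel : J' (k + 1) = J b
  · exact .inr (dsup_last_of_label_eq hb (Nat.lt_succ_of_le hbk) (by rw [hlabel, hJ hbk]))
  · refine .inl ⟨hb, hbc, hck.trans k.le_succ, h.imp (maxByp.succ hJ hlabel) ?_⟩
    rintro ⟨hbyp, hpred⟩
    rw [bypassed_succ_iff hJ hbk]
    exact ⟨not_or.mpr ⟨hbyp, hlabel⟩, hpred⟩

theorem supp.last_of_last (hJ : Set.EqOn J' J (Set.Iic k)) (h : supp G k I J c b)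
    (hc : supp G (k + 1) I J' (k + 1) c) : supp G (k + 1) I J' (k + 1) b := by
  induction h with
  | refl => exact hc
  | tail _ hlink ih =>
    obtain hkept | hlast := hlink.succ_or_last hJ
    · exact ih.tail hkept
    · exact .single hlast

theorem extend_claim_contains_general (hJ : Set.EqOn J' J (Set.Iic k)) (hc : 1 ≤ c) (hck : c ≤ k)
    (hbyp : ¬ bypassed k J c) (hpred : I (k + 1) = G.p1 (I c) ∨ I (k + 1) = G.p2 (I c))
    (hsup : supp G k I J c b) : I (k + 1) ∈ suppSet G (k + 1) I J' b :=
  ⟨k + 1, Nat.succ_pos k, le_rfl, rfl,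
    hsup.last_of_last hJ (.single (dsup_last_of_pred hJ hc hck hbyp hpred))⟩

end ExtendClause

/-- `i_{k+1} ∈ S_1(D_t)` for every `t ∈ {1,…,m}`, where
`D_t = C ∨ ¬p_{i_{k+1},t}`. -/
theorem extend_claim_contains (G : StoneDag) (m k : ℕ) (I J : ℕ → ℕ)
    (hk : 1 ≤ k) (hI1 : I 1 = 1)
    (hmono : ∀ a b, 1 ≤ a → a < b → b ≤ k → I a < I b)
    (hIv : ∀ a, 1 ≤ a → a ≤ k → 1 ≤ I a ∧ I a ≤ G.N)
    (hJv : ∀ a, 1 ≤ a → a ≤ k → 1 ≤ J a ∧ J a ≤ m)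
    (hsup : ∀ a, 1 ≤ a → a ≤ k → supp G k I J a 1)
    (hnew_vertex : 1 ≤ I (k + 1) ∧ I (k + 1) ≤ G.N)
    (hnew_gt : I k < I (k + 1))
    (hnew_pred : ∃ ℓ, 1 ≤ ℓ ∧ ℓ ≤ k ∧ 1 ≤ I ℓ ∧ I ℓ ≤ G.n ∧
        ¬ bypassed k J ℓ ∧ (I (k + 1) = G.p1 (I ℓ) ∨ I (k + 1) = G.p2 (I ℓ))) :
    ∀ t, 1 ≤ t → t ≤ m →
      I (k + 1) ∈ suppSet G (k + 1) I (Function.update J (k + 1) t) 1 := by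
  rintro t - -
  obtain ⟨ℓ, hℓ, hℓk, -, -, hbyp, hpred⟩ := hnew_pred
  have hJ : Set.EqOn (Function.update J (k + 1) t) J (Set.Iic k) := fun a ha =>
    Function.update_of_ne (Nat.lt_succ_of_le ha).ne t J
  exact extend_claim_contains_general hJ hℓ hℓk hbyp hpred (hsup ℓ hℓ hℓk)
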